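/- Rényi-l entropy density from the twisted transfer operator: fix d, D ≥ 1 and a tensor A : Fin d → Matrix (Fin D) (Fin D) ℂ whose transfer matrix T is gapped and normalized (1 is a root of multiplicity one of the characteristic polynomial of T and every other root has modulus < 1). Fix integers l ≥ 2 and k ≥ 2, and for p ≥ 1 set n = k·p and define the Rényi-l entropy of the normalized reduced state of every k-th site as S_l^{(p)} = (1/(1−l)) · ( Real.log((trace((σ_k^{(n)})^l)).re) − l · Real.log((trace σ_k^{(n)}).re) ). Then liminf_{p→∞} (1/p) · S_l^{(p)} = −(1/(l−1)) · Real.log(r), where r is the maximum of the moduli of the roots of the characteristic polynomial of the order-l twisted transfer operator ₗT̂_k (the spectral radius of ₗT̂_k). -/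

import Mathlib

open Matrix Filter
open scoped Kronecker

/-- The unnormalized MPS wavefunction with periodic boundary conditions. -/
noncomputable def mpsPsi {d D : ℕ} (n : ℕ) (A : Fin d → Matrix (Fin D) (Fin D) ℂ)
    (i : Fin n → Fin d) : ℂ :=
  ((List.ofFn fun j : Fin n => A (i j)).prod).trace

/-- The full configuration on `k * p` sites determined by the configuration `I` on the kept
sites (index `≡ k - 1 (mod k)`) and `c` on the traced-out sites. -/
def combCfg (d k p : ℕ) (I : Fin p → Fin d)
    (c : {m : Fin (k * p) // (m : ℕ) % k ≠ k - 1} → Fin d) : Fin (k * p) → Fin d :=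
  fun m =>
    if h : (m : ℕ) % k = k - 1 then I ⟨(m : ℕ) / k, Nat.div_lt_of_lt_mul m.2⟩
    else c ⟨m, h⟩

/-- The unnormalized reduced density matrix of every `k`-th site of the length-`k * p` MPS. -/
noncomputable def combReducedState (d D k p : ℕ) (A : Fin d → Matrix (Fin D) (Fin D) ℂ) :
    Matrix (Fin p → Fin d) (Fin p → Fin d) ℂ :=
  fun J I => ∑ c : {m : Fin (k * p) // (m : ℕ) % k ≠ k - 1} → Fin d,
    mpsPsi (k * p) A (combCfg d k p I c) * star (mpsPsi (k * p) A (combCfg d k p J c))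

/-- The transfer matrix `T = ∑ i, A i ⊗ₖ (A i).map star` of the MPS tensor `A`. -/
noncomputable def mpsTransfer {d D : ℕ} (A : Fin d → Matrix (Fin D) (Fin D) ℂ) :
    Matrix (Fin D × Fin D) (Fin D × Fin D) ℂ :=
  ∑ i, A i ⊗ₖ (A i).map star

/-- The cyclic successor `i ↦ i + 1` on `Fin l`. -/
def cycSucc {l : ℕ} (i : Fin l) : Fin l :=
  ⟨((i : ℕ) + 1) % l, Nat.mod_lt _ (Nat.lt_of_le_of_lt (Nat.zero_le _) i.isLt)⟩

/-- The `l`-fold Kronecker power of a matrix on `Fin D × Fin D`, realized on the index type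
`Fin l → Fin D × Fin D`. -/
def kronPow {D : ℕ} (l : ℕ) (T : Matrix (Fin D × Fin D) (Fin D × Fin D) ℂ) :
    Matrix (Fin l → Fin D × Fin D) (Fin l → Fin D × Fin D) ℂ :=
  fun f g => ∏ i, T (f i) (g i)

/-- The permutation matrix `U_l` twisting the conjugated bond factors cyclically. -/
def ulMatrix (l D : ℕ) : Matrix (Fin l → Fin D × Fin D) (Fin l → Fin D × Fin D) ℂ :=
  fun f g => if ∀ i, (f i).1 = (g i).1 ∧ (f i).2 = (g (cycSucc i)).2 then 1 else 0

/-- The order-`l` twisted transfer operator `ₗT̂_k = (T^{⊗l})^(k-1) * U_l⁻¹ * T^{⊗l} * U_l`. -/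
noncomputable def twistedTransferL {d D : ℕ} (l k : ℕ)
    (A : Fin d → Matrix (Fin D) (Fin D) ℂ) :
    Matrix (Fin l → Fin D × Fin D) (Fin l → Fin D × Fin D) ℂ :=
  (kronPow l (mpsTransfer A)) ^ (k - 1) * (ulMatrix l D)⁻¹ * kronPow l (mpsTransfer A) *
    ulMatrix l D

/-!
The `l`-th power of the reduced state has trace a sum over `l` copies of the ket and the bra, the
bra of each copy being joined to the ket of the next one on the kept sites and to its own ket on
the traced-out sites. Contracting the copies site by site gives `tr σ ^ l = tr (ₗT̂_k) ^ p`, while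
`tr σ = tr T ^ (k * p)` converges to the multiplicity of the eigenvalue `1`. Traces of `p`-th
powers are power sums of eigenvalues, so `|tr (ₗT̂_k) ^ p| ≤ D ^ (2 * l) * r ^ p`. There is no such
lower bound for every `p`, because the eigenvalues of largest modulus may cancel, but the phases of
all eigenvalues return close to `1` simultaneously for infinitely many `p`, and for these
`tr (ₗT̂_k) ^ p ≥ r ^ p / 2`. The factor `1 / (1 - l)` is negative, so the upper bound on the trace,
valid for all `p`, bounds the entropy density from below, and the recurrent lower bound makes this
rate the liminf.
-/

section Spectral

variable {n K : Type*} [Fintype n] [DecidableEq n] [Field K] [IsAlgClosed K]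

theorem card_roots_charpoly (M : Matrix n n K) :
    M.charpoly.roots.card = Fintype.card n :=
  (IsAlgClosed.splits _).natDegree_eq_card_roots.symm.trans M.charpoly_natDegree_eq_dim

open Polynomial in
theorem det_aeval_eq_prod_roots_charpoly (M : Matrix n n K) (q : K[X]) :
    (aeval M q).det = (M.charpoly.roots.map fun z => q.eval z).prod := by
  have hsplits := IsAlgClosed.splits M.charpoly
  refine Submonoid.closure_induction
    (motive := fun q _ => (aeval M q).det = (M.charpoly.roots.map fun z => q.eval z).prod)
    ?_ (by simp) (fun f g _ _ hf hg => by simp [hf, hg, Multiset.prod_map_mul])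
    (IsAlgClosed.splits q)
  rintro _ (⟨a, rfl⟩ | ⟨a, rfl⟩)
  · simp [card_roots_charpoly, Algebra.algebraMap_eq_smul_one]
  · have hneg : aeval M (X + C a) = -(scalar n (-a) - M) := by
      simp [algebraMap_eq_diagonal, Pi.algebraMap_def, sub_eq_add_neg, ← diagonal_neg]
    rw [hneg, det_neg, ← eval_charpoly, hsplits.eval_eq_prod_roots_of_monic M.charpoly_monic,
      ← card_roots_charpoly M, ← Multiset.card_map (fun z => -a - z), ← Multiset.prod_map_neg,
      Multiset.map_map]
    simp [add_comm]

open Polynomial in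
theorem roots_charpoly_aeval (M : Matrix n n K) (q : K[X]) :
    (aeval M q).charpoly.roots = M.charpoly.roots.map fun z => q.eval z := by
  suffices h : (aeval M q).charpoly =
      ((M.charpoly.roots.map fun z => q.eval z).map fun a => X - C a).prod by
    rw [h, roots_multiset_prod_X_sub_C]
  refine Polynomial.funext fun y => ?_
  have hscalar : scalar n y - aeval M q = aeval M (C y - q) := by
    simp [algebraMap_eq_diagonal, Pi.algebraMap_def]
  rw [eval_charpoly, hscalar, det_aeval_eq_prod_roots_charpoly, eval_multiset_prod,
    Multiset.map_map, Multiset.map_map]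
  simp

theorem trace_pow_eq_sum_roots_charpoly (M : Matrix n n K) (p : ℕ) :
    (M ^ p).trace = (M.charpoly.roots.map (· ^ p)).sum := by
  simpa [trace_eq_sum_roots_charpoly] using
    congrArg Multiset.sum (roots_charpoly_aeval M (Polynomial.X ^ p))

theorem tendsto_sum_map_pow_count_one (S : Multiset ℂ) (h : ∀ z ∈ S, z ≠ 1 → ‖z‖ < 1) :
    Tendsto (fun p : ℕ => (S.map (· ^ p)).sum) atTop (nhds (S.count 1 : ℂ)) := by
  induction S using Multiset.induction with
  | empty => simp
  | cons a S ih =>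
    have hS := ih fun z hz => h z (Multiset.mem_cons_of_mem hz)
    rcases eq_or_ne a 1 with rfl | ha
    · simpa [add_comm] using hS.const_add 1
    · simpa [ha.symm] using
        (tendsto_pow_atTop_nhds_zero_of_norm_lt_one (h a (S.mem_cons_self a) ha)).add hS

theorem tendsto_trace_pow_rootMultiplicity_one (M : Matrix n n ℂ)
    (h : ∀ z ∈ M.charpoly.roots, z ≠ 1 → ‖z‖ < 1) :
    Tendsto (fun p : ℕ => (M ^ p).trace) atTop (nhds (M.charpoly.rootMultiplicity 1)) := by
  simpa only [trace_pow_eq_sum_roots_charpoly, Polynomial.count_roots] using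
    tendsto_sum_map_pow_count_one _ h

theorem norm_trace_pow_le (M : Matrix n n ℂ) {r : ℝ} (h : ∀ z ∈ M.charpoly.roots, ‖z‖ ≤ r)
    (p : ℕ) : ‖(M ^ p).trace‖ ≤ Fintype.card n * r ^ p := by
  rw [trace_pow_eq_sum_roots_charpoly, ← card_roots_charpoly M, ← nsmul_eq_mul]
  refine (norm_multiset_sum_le _).trans ?_
  rw [← Multiset.card_map (fun z : ℂ => ‖z ^ p‖), Multiset.map_map]
  refine Multiset.sum_le_card_nsmul _ _ fun x hx => ?_
  obtain ⟨z, hz, rfl⟩ := Multiset.mem_map.1 hx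
  simpa using pow_le_pow_left₀ (norm_nonneg z) (h z hz) p

-- Compactness of the torus `ℂ → Circle`: the powers of any element accumulate at `1`.
theorem frequently_half_mul_norm_pow_le_re_pow (S : Multiset ℂ) :
    ∃ᶠ p : ℕ in atTop, ∀ z ∈ S, 1 / 2 * ‖z‖ ^ p ≤ (z ^ p).re := by
  let u : ℂ → Circle := fun z => Circle.exp z.arg
  have hnear : ∀ᶠ v : ℂ → Circle in nhds 1, ∀ z ∈ S.toFinset, (1 / 2 : ℝ) < (v z : ℂ).re := by
    refine (Filter.eventually_all_finset _).2 fun z _ => ?_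
    have hcont : Continuous fun v : ℂ → Circle => (v z : ℂ).re := by fun_prop
    exact hcont.continuousAt.eventually_const_lt (by norm_num)
  refine ((mapClusterPt_iff_frequently.1 (mapClusterPt_one_atTop_pow u)) _ hnear).mono
    fun p hp z hz => ?_
  have hpolar : z ^ p = ((‖z‖ ^ p : ℝ) : ℂ) * ((u ^ p) z : ℂ) := by
    simp only [u, Pi.pow_apply, Circle.coe_pow, Circle.coe_exp, Complex.ofReal_pow]
    rw [← mul_pow, Complex.norm_mul_exp_arg_mul_I]
  rw [hpolar, Complex.re_ofReal_mul, mul_comm]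
  exact mul_le_mul_of_nonneg_left (hp z (Multiset.mem_toFinset.2 hz)).le (by positivity)

theorem frequently_half_mul_norm_pow_le_re_trace_pow (M : Matrix n n ℂ) {z : ℂ}
    (hz : z ∈ M.charpoly.roots) :
    ∃ᶠ p : ℕ in atTop, 1 / 2 * ‖z‖ ^ p ≤ (M ^ p).trace.re := by
  refine (frequently_half_mul_norm_pow_le_re_pow M.charpoly.roots).mono fun p hp => ?_
  have hre : (M ^ p).trace.re = (M.charpoly.roots.map fun z => (z ^ p).re).sum := by
    rw [trace_pow_eq_sum_roots_charpoly, ← Complex.coe_reAddGroupHom, map_multiset_sum,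
      Multiset.map_map]
    rfl
  rw [hre]
  refine (hp z hz).trans (Multiset.single_le_sum (fun x hx => ?_) _
    (Multiset.mem_map_of_mem (fun z => (z ^ p).re) hz))
  obtain ⟨w, hw, rfl⟩ := Multiset.mem_map.1 hx
  exact le_trans (by positivity) (hp w hw)

open scoped ComplexOrder in
theorem trace_pow_pos_of_posSemidef {𝕜 : Type*} [RCLike 𝕜] {M : Matrix n n 𝕜}
    (hM : M.PosSemidef) (htr : M.trace ≠ 0) (l : ℕ) : 0 < (M ^ l).trace := by
  refine (hM.pow l).trace_nonneg.lt_of_ne' fun h0 => htr ?_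
  exact (isNilpotent_trace_of_isNilpotent ⟨l, (hM.pow l).trace_eq_zero_iff.1 h0⟩).eq_zero

end Spectral

section Liminf

theorem liminf_eq_of_eventually_ge_of_frequently_le {ι α : Type*}
    [ConditionallyCompleteLinearOrder α] [DenselyOrdered α] [TopologicalSpace α] [OrderTopology α]
    [NoMinOrder α] [NoMaxOrder α]
    {F : Filter ι} {f g h : ι → α} {a : α} (hg : Tendsto g F (nhds a)) (hh : Tendsto h F (nhds a))
    (hgf : ∀ᶠ i in F, g i ≤ f i) (hfh : ∃ᶠ i in F, f i ≤ h i) :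
    liminf f F = a := by
  have hlower : ∀ b < a, ∀ᶠ i in F, b ≤ f i := fun b hb =>
    (hgf.and (hg.eventually_const_le hb)).mono fun i hi => hi.2.trans hi.1
  have hupper : ∀ b > a, ∃ᶠ i in F, f i ≤ b := fun b hb =>
    (hfh.and_eventually (hh.eventually_le_const hb)).mono fun i hi => hi.1.trans hi.2
  refine le_antisymm (le_of_forall_gt_imp_ge_of_dense fun b hb => ?_)
    (le_of_forall_lt_imp_le_of_dense fun b hb => ?_)
  · obtain ⟨c, hc⟩ := exists_lt a
    exact liminf_le_of_frequently_le (hupper b hb) ⟨c, hlower c hc⟩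
  · obtain ⟨c, hc⟩ := exists_gt a
    exact le_liminf_of_le (IsCoboundedUnder.of_frequently_le (hupper c hc)) (hlower b hb)

theorem tendsto_inv_mul_log_const_mul_pow {C r : ℝ} (hC : 0 < C) (hr : 0 < r) :
    Tendsto (fun p : ℕ => 1 / (p : ℝ) * Real.log (C * r ^ p)) atTop (nhds (Real.log r)) := by
  have hlim : Tendsto (fun p : ℕ => 1 / (p : ℝ) * Real.log C + Real.log r) atTop
      (nhds (Real.log r)) := by
    simpa using (tendsto_one_div_atTop_nhds_zero_nat.mul_const (Real.log C)).add_const (Real.log r)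
  refine hlim.congr' ?_
  filter_upwards [eventually_ne_atTop 0] with p hp
  rw [Real.log_mul hC.ne' (by positivity), Real.log_pow]
  field_simp

theorem liminf_inv_mul_log_sub_log {x y : ℕ → ℝ} {r N a c : ℝ} (b : ℝ) (ha : a < 0) (hr0 : 0 ≤ r)
    (hc : c ≠ 0) (hx : ∀ᶠ p in atTop, 0 < x p) (hy : Tendsto y atTop (nhds c))
    (hxle : ∀ p, x p ≤ N * r ^ p) (hlex : ∃ᶠ p in atTop, 1 / 2 * r ^ p ≤ x p) :
    liminf (fun p : ℕ => 1 / (p : ℝ) * (a * (Real.log (x p) - b * Real.log (y p)))) atTop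
      = a * Real.log r := by
  obtain ⟨p, hxp, hp⟩ := (hx.and (eventually_ge_atTop 1)).exists
  have hNr : 0 < N * r ^ p := hxp.trans_le (hxle p)
  have hr : 0 < r := hr0.lt_of_ne' fun h => by simp [h, zero_pow (show p ≠ 0 by omega)] at hNr
  have hN : 0 < N := pos_of_mul_pos_left hNr (by positivity)
  have hlogy : Tendsto (fun p : ℕ => 1 / (p : ℝ) * Real.log (y p)) atTop (nhds 0) := by
    simpa using tendsto_one_div_atTop_nhds_zero_nat.mul (hy.log hc)
  have hrate : ∀ C > 0, Tendsto
      (fun p : ℕ => 1 / (p : ℝ) * (a * (Real.log (C * r ^ p) - b * Real.log (y p))))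
      atTop (nhds (a * Real.log r)) := fun C hC => by
    have hlim := ((tendsto_inv_mul_log_const_mul_pow hC hr).sub (hlogy.const_mul b)).const_mul a
    rw [mul_zero, sub_zero] at hlim
    exact hlim.congr fun p => by ring
  have hanti : ∀ (p : ℕ) {s t : ℝ}, 0 < s → s ≤ t →
      1 / (p : ℝ) * (a * (Real.log t - b * Real.log (y p))) ≤
        1 / (p : ℝ) * (a * (Real.log s - b * Real.log (y p))) := fun p s t hs hst =>
    mul_le_mul_of_nonneg_left
      (mul_le_mul_of_nonpos_left (sub_le_sub_right (Real.log_le_log hs hst) _) ha.le)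
      (by positivity)
  exact liminf_eq_of_eventually_ge_of_frequently_le (hrate N hN) (hrate (1 / 2) (by norm_num))
    (hx.mono fun p hp => hanti p hp (hxle p))
    (hlex.mono fun p hp => hanti p (by positivity) hp)

end Liminf

section OrderedProducts

theorem sum_prod_ofFn {R X : Type*} [Semiring R] [Fintype X] {n : ℕ} (E : Fin n → X → R) :
    ∑ w : Fin n → X, (List.ofFn fun m => E m (w m)).prod =
      (List.ofFn fun m => ∑ x, E m x).prod := by
  induction n with
  | zero => simp
  | succ n ih =>
    rw [← (Fin.consEquiv fun _ : Fin (n + 1) => X).sum_comp, Fintype.sum_prod_type]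
    simp only [List.ofFn_succ, List.prod_cons, Fin.consEquiv_apply, Fin.cons_zero, Fin.cons_succ]
    rw [← ih fun m => E m.succ, Finset.sum_mul_sum]

theorem prod_ofFn_ite_mod_eq_pred {G : Type*} [Monoid G] {k : ℕ} (hk : 1 ≤ k) (p : ℕ) (a b : G) :
    (List.ofFn fun m : Fin (k * p) => if (m : ℕ) % k = k - 1 then b else a).prod
      = (a ^ (k - 1) * b) ^ p := by
  obtain ⟨n, rfl⟩ : ∃ n, k = n + 1 := ⟨k - 1, by omega⟩
  have hblock : (List.ofFn fun j : Fin (n + 1) => if (j : ℕ) % (n + 1) = n then b else a).prod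
      = a ^ n * b := by
    have hinit : ∀ j : Fin n, (j : ℕ) % (n + 1) ≠ n := fun j => by
      rw [Nat.mod_eq_of_lt (by omega)]; omega
    rw [List.ofFn_succ']
    simp [hinit, List.ofFn_const]
  simp only [List.ofFn_mul', List.prod_flatten, Nat.mul_add_mod, Nat.add_sub_cancel,
    List.ofFn_const, List.map_replicate, hblock, List.prod_replicate]

theorem prod_ofFn_kronecker {R m n : Type*} [CommSemiring R] [Fintype m] [DecidableEq m]
    [Fintype n] [DecidableEq n] {N : ℕ} (B : Fin N → Matrix m m R) (C : Fin N → Matrix n n R) :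
    (List.ofFn fun i => B i ⊗ₖ C i).prod = (List.ofFn B).prod ⊗ₖ (List.ofFn C).prod := by
  induction N with
  | zero => simp
  | succ N ih => simp [List.ofFn_succ, ih, mul_kronecker_mul]

end OrderedProducts

section PiKronecker

variable {ι m n o R : Type*} [Fintype ι] [CommSemiring R]

/-- The tensor product `⨂ i, M i` of a finite family of matrices, with rows and columns indexed
by functions on `ι`; `kronPow` is the case of a constant family. -/
def piKronecker (M : ι → Matrix m n R) : Matrix (ι → m) (ι → n) R :=
  of fun f g => ∏ i, M i (f i) (g i)

theorem piKronecker_mul [DecidableEq ι] [Fintype n] (M : ι → Matrix m n R) (N : ι → Matrix n o R) :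
    piKronecker M * piKronecker N = piKronecker fun i => M i * N i := by
  ext f g
  simp [piKronecker, mul_apply, Fintype.prod_sum, Finset.prod_mul_distrib]

theorem piKronecker_one [DecidableEq n] :
    piKronecker (fun _ : ι => (1 : Matrix n n R)) = 1 := by
  classical
  ext f g
  simp [piKronecker, one_apply, Finset.prod_ite_zero, funext_iff]

theorem piKronecker_prod_ofFn [DecidableEq ι] [Fintype n] [DecidableEq n] {N : ℕ}
    (M : Fin N → ι → Matrix n n R) :
    (List.ofFn fun a => piKronecker (M a)).prod =
      piKronecker fun i => (List.ofFn fun a => M a i).prod := by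
  induction N with
  | zero => simp [piKronecker_one]
  | succ N ih => simp [List.ofFn_succ, ih, piKronecker_mul]

theorem trace_piKronecker [DecidableEq ι] [Fintype n] (M : ι → Matrix n n R) :
    (piKronecker M).trace = ∏ i, (M i).trace := by
  simp [trace, piKronecker, Fintype.prod_sum]

/-- The permutation of the tensor basis that precomposes the second (bra) indices with `s` and
fixes the first (ket) indices. -/
def braPerm {m n : Type*} (s : Equiv.Perm ι) : Equiv.Perm (ι → m × n) where
  toFun f i := ((f i).1, (f (s i)).2)
  invFun f i := ((f i).1, (f (s⁻¹ i)).2)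
  left_inv f := by simp
  right_inv f := by simp

theorem sum_piKronecker_kronecker_perm [DecidableEq ι] {X : Type*} [Fintype X]
    (B : X → Matrix m m R) (C : X → Matrix n n R) (s : Equiv.Perm ι) :
    ∑ v : ι → X, piKronecker (fun i => B (v (s i)) ⊗ₖ C (v i)) =
      (piKronecker fun _ : ι => ∑ x, B x ⊗ₖ C x).submatrix (braPerm s) (braPerm s) := by
  ext f g
  simp only [Matrix.sum_apply, piKronecker, of_apply, submatrix_apply, Fintype.prod_sum, braPerm,
    Equiv.coe_fn_mk, kroneckerMap_apply, Finset.prod_mul_distrib]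
  refine Fintype.sum_equiv (s.symm.arrowCongr (Equiv.refl X)) _ _ fun v => ?_
  rw [← Equiv.prod_comp s fun i => C (v i) (f i).2 (g i).2]
  rfl

end PiKronecker

section CyclicTrace

variable {R ι : Type*} [CommSemiring R] [Fintype ι] [DecidableEq ι]

theorem sum_path_prod_mul (M : Matrix ι ι R) (n : ℕ) (G : ι → ι → R) :
    ∑ I : Fin (n + 1) → ι, (∏ j : Fin n, M (I j.castSucc) (I j.succ)) * G (I 0) (I (Fin.last n))
      = ∑ a, ∑ b, (M ^ n) a b * G a b := by
  induction n generalizing G with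
  | zero =>
    rw [← (Equiv.funUnique (Fin 1) ι).symm.sum_comp]
    simp [one_apply]
  | succ n ih =>
    rw [← (Fin.consEquiv fun _ : Fin (n + 2) => ι).sum_comp, Fintype.sum_prod_type]
    refine Finset.sum_congr rfl fun a _ => ?_
    have hpath := ih fun b c => M a b * G a c
    simp only [Fin.consEquiv_apply, Fin.prod_univ_succ, Fin.castSucc_zero, Fin.cons_zero,
      Fin.cons_succ, ← Fin.succ_castSucc, ← Fin.succ_last, pow_succ', mul_apply, Finset.sum_mul]
    rw [Finset.sum_comm]
    simpa only [mul_assoc, mul_left_comm] using hpath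

theorem trace_pow_eq_sum_prod_finRotate (M : Matrix ι ι R) (l : ℕ) [NeZero l] :
    (M ^ l).trace = ∑ I : Fin l → ι, ∏ j, M (I j) (I (finRotate l j)) := by
  obtain ⟨n, rfl⟩ := Nat.exists_eq_succ_of_ne_zero (NeZero.ne l)
  rw [pow_succ]
  simp only [trace, diag, mul_apply]
  rw [← sum_path_prod_mul M n fun a b => M b a]
  simp [Fin.prod_univ_castSucc]

end CyclicTrace

section TwistedTransfer

theorem finRotate_eq_cycSucc {l : ℕ} (i : Fin l) : finRotate l i = cycSucc i := by
  have := i.neZero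
  ext
  simp [cycSucc, Fin.val_add]

theorem ulMatrix_eq_permMatrix (l D : ℕ) :
    ulMatrix l D = (braPerm (finRotate l))⁻¹.permMatrix ℂ := by
  ext f g
  have hiff : (braPerm (finRotate l))⁻¹ f = g ↔
      ∀ i, (f i).1 = (g i).1 ∧ (f i).2 = (g (cycSucc i)).2 := by
    simp only [Equiv.Perm.inv_eq_iff_eq, braPerm, Equiv.coe_fn_mk, funext_iff, Prod.ext_iff,
      finRotate_eq_cycSucc]
  simp only [ulMatrix, PEquiv.toMatrix_apply, Equiv.toPEquiv_apply, Option.mem_some_iff, hiff]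

/-- The permutation of the replicas acting at site `m`: `s` on the kept sites of the comb, trivial
on the traced-out ones. -/
def combPerm {ι : Type*} (k : ℕ) (s : Equiv.Perm ι) (m : ℕ) : Equiv.Perm ι :=
  if m % k = k - 1 then s else 1

variable {d D : ℕ} (A : Fin d → Matrix (Fin D) (Fin D) ℂ)

theorem twistedTransferL_eq_mul_submatrix (l k : ℕ) :
    twistedTransferL l k A = kronPow l (mpsTransfer A) ^ (k - 1) *
      (kronPow l (mpsTransfer A)).submatrix (braPerm (finRotate l)) (braPerm (finRotate l)) := by
  have hinv : (ulMatrix l D)⁻¹ = (braPerm (finRotate l)).permMatrix ℂ := by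
    refine inv_eq_left_inv ?_
    rw [ulMatrix_eq_permMatrix, ← permMatrix_mul]
    simp
  rw [twistedTransferL, hinv, ulMatrix_eq_permMatrix, mul_assoc, mul_assoc]
  rw [PEquiv.mul_toMatrix_toPEquiv, PEquiv.toMatrix_toPEquiv_mul, submatrix_submatrix]
  rfl

theorem mpsPsi_mul_star {n : ℕ} (a b : Fin n → Fin d) :
    mpsPsi n A a * star (mpsPsi n A b) =
      (List.ofFn fun m => A (a m) ⊗ₖ (A (b m)).map star).prod.trace := by
  have hstar : star (mpsPsi n A b) = (List.ofFn fun m => (A (b m)).map star).prod.trace := by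
    have hprod := map_list_prod (starRingEnd ℂ).mapMatrix (List.ofFn fun m => A (b m))
    rw [List.map_ofFn] at hprod
    exact (AddMonoidHom.map_trace (starRingEnd ℂ) _).trans (congrArg trace hprod)
  rw [hstar, mpsPsi, prod_ofFn_kronecker, trace_kronecker]

theorem prod_mpsPsi_mul_star {n : ℕ} {ι : Type*} [Fintype ι] [DecidableEq ι]
    (a b : ι → Fin n → Fin d) :
    ∏ j, (mpsPsi n A (a j) * star (mpsPsi n A (b j))) =
      (List.ofFn fun m =>
        piKronecker fun j => A (a j m) ⊗ₖ (A (b j m)).map star).prod.trace := by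
  simp only [mpsPsi_mul_star, piKronecker_prod_ofFn, trace_piKronecker]

theorem sum_mpsPsi_mul_star (n : ℕ) :
    ∑ w, mpsPsi n A w * star (mpsPsi n A w) = (mpsTransfer A ^ n).trace := by
  simp only [mpsPsi_mul_star, ← trace_sum]
  rw [sum_prod_ofFn fun _ a => A a ⊗ₖ (A a).map star, List.ofFn_const, List.prod_replicate]
  rfl

theorem trace_twistedTransferL_pow (l : ℕ) {k : ℕ} (hk : 1 ≤ k) (p : ℕ) :
    (twistedTransferL l k A ^ p).trace = ∑ w : Fin l → Fin (k * p) → Fin d, ∏ j,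
      (mpsPsi (k * p) A (fun m => w (combPerm k (finRotate l) m j) m) *
        star (mpsPsi (k * p) A (w j))) := by
  have hlocal : ∀ m : ℕ, (∑ v : Fin l → Fin d,
      piKronecker fun j => A (v (combPerm k (finRotate l) m j)) ⊗ₖ (A (v j)).map star) =
      if m % k = k - 1 then
        (kronPow l (mpsTransfer A)).submatrix (braPerm (finRotate l)) (braPerm (finRotate l))
      else kronPow l (mpsTransfer A) := fun m => by
    rw [sum_piKronecker_kronecker_perm A fun a => (A a).map star, combPerm]
    split_ifs <;> rfl
  rw [twistedTransferL_eq_mul_submatrix, ← prod_ofFn_ite_mod_eq_pred hk]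
  simp only [← hlocal, prod_mpsPsi_mul_star]
  rw [← sum_prod_ofFn fun (m : Fin (k * p)) (v : Fin l → Fin d) => piKronecker fun j =>
    A (v (combPerm k (finRotate l) m j)) ⊗ₖ (A (v j)).map star, trace_sum]
  exact Fintype.sum_equiv (Equiv.piComm _) _ _ fun w => rfl

end TwistedTransfer

section CombReducedState

/-- The splitting of a configuration of the whole chain into kept and traced-out sites. -/
def combCfgEquiv (d p : ℕ) {k : ℕ} (hk : 1 ≤ k) :
    (Fin p → Fin d) × ({m : Fin (k * p) // (m : ℕ) % k ≠ k - 1} → Fin d) ≃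
      (Fin (k * p) → Fin d) where
  toFun x := combCfg d k p x.1 x.2
  invFun w :=
    (fun q => w ⟨k * q + (k - 1), by
      have := Nat.mul_le_mul_left k q.isLt
      rw [Nat.mul_succ] at this
      omega⟩, fun c => w c)
  left_inv := by
    rintro ⟨I, c⟩
    have hmod : ∀ q : ℕ, (k * q + (k - 1)) % k = k - 1 := fun q => by
      rw [Nat.mul_add_mod, Nat.mod_eq_of_lt (by omega)]
    have hdiv : ∀ q : ℕ, (k * q + (k - 1)) / k = q := fun q => by
      rw [Nat.mul_add_div (by omega), Nat.div_eq_of_lt (by omega), add_zero]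
    refine Prod.ext (funext fun q => ?_) (funext fun m => ?_)
    · simp [combCfg, hmod, hdiv]
    · simp [combCfg, m.2]
  right_inv w := by
    funext m
    by_cases h : (m : ℕ) % k = k - 1
    · have hm : k * ((m : ℕ) / k) + (k - 1) = m := h ▸ Nat.div_add_mod _ _
      simp [combCfg, h, hm]
    · simp [combCfg, h]

theorem combCfg_perm {d k p : ℕ} {ι : Type*} (s : Equiv.Perm ι) (I : ι → Fin p → Fin d)
    (c : ι → {m : Fin (k * p) // (m : ℕ) % k ≠ k - 1} → Fin d) (j : ι) :
    combCfg d k p (I (s j)) (c j) =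
      fun m : Fin (k * p) => combCfg d k p (I (combPerm k s m j)) (c (combPerm k s m j)) m := by
  funext m
  by_cases h : (m : ℕ) % k = k - 1 <;> simp [combCfg, combPerm, h]

variable {d D : ℕ} (A : Fin d → Matrix (Fin D) (Fin D) ℂ)

theorem trace_combReducedState_pow (l : ℕ) [NeZero l] {k : ℕ} (hk : 1 ≤ k) (p : ℕ) :
    (combReducedState d D k p A ^ l).trace = (twistedTransferL l k A ^ p).trace := by
  simp only [trace_pow_eq_sum_prod_finRotate, combReducedState, Fintype.prod_sum]
  rw [← Fintype.sum_prod_type', trace_twistedTransferL_pow A l hk]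
  exact Fintype.sum_equiv ((Equiv.arrowProdEquivProdArrow _ _ _).symm.trans
    (Equiv.arrowCongr (Equiv.refl _) (combCfgEquiv d p hk))) _ _ fun x =>
      Finset.prod_congr rfl fun j _ => by rw [combCfg_perm (finRotate l) x.1 x.2 j]; rfl

theorem trace_combReducedState {k : ℕ} (hk : 1 ≤ k) (p : ℕ) :
    (combReducedState d D k p A).trace = (mpsTransfer A ^ (k * p)).trace := by
  rw [← sum_mpsPsi_mul_star, ← (combCfgEquiv d p hk).sum_comp, Fintype.sum_prod_type]
  rfl

theorem tendsto_re_trace_combReducedState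
    (h : ∀ z ∈ (mpsTransfer A).charpoly.roots, z ≠ 1 → ‖z‖ < 1) {k : ℕ} (hk : 1 ≤ k) :
    Tendsto (fun p => (combReducedState d D k p A).trace.re) atTop
      (nhds ((mpsTransfer A).charpoly.rootMultiplicity 1)) := by
  simp only [trace_combReducedState A hk]
  exact (Complex.continuous_re.tendsto _).comp
    ((tendsto_trace_pow_rootMultiplicity_one _ h).comp (tendsto_id.const_mul_atTop' hk))

open scoped ComplexOrder in
theorem posSemidef_combReducedState (k p : ℕ) :
    (combReducedState d D k p A).PosSemidef := by
  let Ψ : Matrix ({m : Fin (k * p) // (m : ℕ) % k ≠ k - 1} → Fin d) (Fin p → Fin d) ℂ :=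
    of fun c I => mpsPsi (k * p) A (combCfg d k p I c)
  have hΨ : combReducedState d D k p A = Ψᴴ * Ψ := by
    ext J I
    simp only [mul_apply, conjTranspose_apply, Ψ, of_apply, mul_comm (star _)]
    rfl
  rw [hΨ]
  exact posSemidef_conjTranspose_mul_self Ψ

open scoped ComplexOrder in
theorem re_trace_combReducedState_pow_pos {k p : ℕ} (h : (combReducedState d D k p A).trace.re ≠ 0)
    (l : ℕ) : 0 < (combReducedState d D k p A ^ l).trace.re :=
  (Complex.pos_iff.1 (trace_pow_pos_of_posSemidef (posSemidef_combReducedState A k p)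
    (fun h0 => h (by simp [h0])) l)).1

end CombReducedState

theorem renyi_entropy_density_eq_log_spectral_radius_general {d D : ℕ}
    (A : Fin d → Matrix (Fin D) (Fin D) ℂ) (h1 : (mpsTransfer A).charpoly.IsRoot 1)
    (h2 : ∀ z ∈ (mpsTransfer A).charpoly.roots, z ≠ 1 → ‖z‖ < 1)
    {l k : ℕ} (hl : 2 ≤ l) (hk : 1 ≤ k) {r : ℝ}
    (hr : IsGreatest {x : ℝ | ∃ z ∈ (twistedTransferL l k A).charpoly.roots, ‖z‖ = x} r) :
    liminf (fun p : ℕ =>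
        (1 / (p : ℝ)) * ((1 / (1 - (l : ℝ))) *
          (Real.log ((((combReducedState d D k p A) ^ l).trace).re)
            - (l : ℝ) * Real.log (((combReducedState d D k p A).trace).re)))) atTop
      = -(1 / ((l : ℝ) - 1)) * Real.log r := by
  have : NeZero l := ⟨by omega⟩
  have hl1 : (1 : ℝ) < l := by exact_mod_cast hl
  obtain ⟨⟨z, hz, rfl⟩, hmax⟩ := hr
  have hmult : (mpsTransfer A).charpoly.rootMultiplicity 1 ≠ 0 :=
    ((Polynomial.rootMultiplicity_pos (charpoly_monic _).ne_zero).2 h1).ne'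
  have htrace := tendsto_re_trace_combReducedState A h2 hk
  have hpos : ∀ᶠ p in atTop, 0 < (combReducedState d D k p A ^ l).trace.re :=
    (htrace.eventually_ne (Nat.cast_ne_zero.2 hmult)).mono fun p hp =>
      re_trace_combReducedState_pow_pos A hp l
  have hupper : ∀ p, (combReducedState d D k p A ^ l).trace.re ≤
      Fintype.card (Fin l → Fin D × Fin D) * ‖z‖ ^ p := fun p =>
    (Complex.re_le_norm _).trans <| trace_combReducedState_pow A l hk p ▸
      norm_trace_pow_le _ (fun w hw => hmax ⟨w, hw, rfl⟩) p
  have hlower : ∃ᶠ p in atTop, 1 / 2 * ‖z‖ ^ p ≤ (combReducedState d D k p A ^ l).trace.re := by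
    simpa only [trace_combReducedState_pow A l hk] using
      frequently_half_mul_norm_pow_le_re_trace_pow _ hz
  rw [liminf_inv_mul_log_sub_log l (one_div_neg.2 (sub_neg.2 hl1)) (norm_nonneg z)
    (Nat.cast_ne_zero.2 hmult) hpos htrace hupper hlower,
    ← neg_sub (l : ℝ) 1, one_div_neg_eq_neg_one_div]

/-- Rényi-`l` entropy density from the twisted transfer operator: if the transfer matrix of the
MPS tensor `A` is gapped and normalized, then for `l, k ≥ 2` the liminf of the Rényi-`l`
entropy density of the state of every `k`-th site equals `-(1/(l-1)) · log r`, where `r` is the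
spectral radius of the order-`l` twisted transfer operator. -/
theorem renyi_entropy_density_eq_log_spectral_radius
    (d D : ℕ) (hd : 1 ≤ d) (hD : 1 ≤ D)
    (A : Fin d → Matrix (Fin D) (Fin D) ℂ)
    (h1 : Polynomial.rootMultiplicity 1 (mpsTransfer A).charpoly = 1)
    (h2 : ∀ z ∈ (mpsTransfer A).charpoly.roots, z ≠ 1 → ‖z‖ < 1)
    (l k : ℕ) (hl : 2 ≤ l) (hk : 2 ≤ k)
    (r : ℝ)
    (hr : IsGreatest {x : ℝ | ∃ z ∈ (twistedTransferL l k A).charpoly.roots, ‖z‖ = x} r) :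
    liminf (fun p : ℕ =>
        (1 / (p : ℝ)) * ((1 / (1 - (l : ℝ))) *
          (Real.log ((((combReducedState d D k p A) ^ l).trace).re)
            - (l : ℝ) * Real.log (((combReducedState d D k p A).trace).re)))) atTop
      = -(1 / ((l : ℝ) - 1)) * Real.log r := by
  exact renyi_entropy_density_eq_log_spectral_radius_general A
    ((Polynomial.rootMultiplicity_pos (charpoly_monic _).ne_zero).1 (by omega)) h2 hl (by omega) hr
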